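/- For every positive integer n, the Fibonomial coefficient C(8n, n)_F is odd if and only if n = (1 + 3·2^k)/7 for some positive integer k with k ≡ 1 (mod 3). (Note that 7 divides 1 + 3·2^k whenever k ≡ 1 (mod 3).) -/

import Mathlib

/-!
For `m > 0`, `v₂(F_m)` is `0` if `3 ∤ m`, `1` if `m` is an odd multiple of `3`, and `v₂(m) + 2` if
`6 ∣ m`: for `12 ∤ m` this follows from the Fibonacci sequence modulo `16`, the rest from
`F_{2m} = F_m (2 F_{m+1} - F_m)`, whose second factor is `2` modulo `4` when `6 ∣ m`. Equivalently,
`v₂(F_m)` counts the `i` with `3 · 2 ^ i ∣ m`, the index `i = 1` counting twice, and so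
`v₂(F_1 ⋯ F_m) = ∑ i, w i * ⌊m / (3 · 2 ^ i)⌋` with `w 1 = 2` and all other weights `1`.

Consequently `C(8n, n)_F` is odd iff for every `M = 3 · 2 ^ i` there is no carry when `n` and `7n`
are added modulo `M`, i.e. `(7n mod M) + (n mod M) < M` (`odd_iff_noCarry`). Lifting residues from
`M` to `2M` one step at a time, the no-carry residues modulo `3 · 2 ^ j` are `0` and the numbers
`(1 + 3 · 2 ^ k) / 7` with `k ≤ j + 2`: the lift `r + M` of `r = (1 + 3 · 2 ^ k) / 7` survives only
when `k = j`, and then it equals `(1 + 3 · 2 ^ (k + 3)) / 7`. Once `M > n` this determines `n`.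
-/

/-- The Fibonomial coefficient `C(m,k)_F = (F_{m-k+1} ⋯ F_m)/(F_1 ⋯ F_k)`,
with `C(m,0)_F = 1` and `C(m,k)_F = 0` for `k > m`. -/
def fibBinom (m k : ℕ) : ℕ :=
  (∏ i ∈ Finset.range k, Nat.fib (m - i)) / ∏ i ∈ Finset.range k, Nat.fib (i + 1)

/-- The rank of appearance `z(n)`: the least positive `m` with `n ∣ F_m`. -/
noncomputable def fibRank (n : ℕ) : ℕ := sInf {m : ℕ | 0 < m ∧ n ∣ Nat.fib m}

/-- The sum of the digits of `n` in base `q`. -/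
def digitSum (q n : ℕ) : ℕ := (Nat.digits q n).sum

/-! ### Integrality of the Fibonomial coefficients -/

/-- The product `F_1 F_2 ⋯ F_m`. -/
def fibFact (m : ℕ) : ℕ := ∏ i ∈ Finset.range m, Nat.fib (i + 1)

/-- The multiplicity with which divisibility of `m` by `3 · 2 ^ i` contributes to `v₂(F_m)`. -/
def fibWeight (i : ℕ) : ℕ := if i = 1 then 2 else 1

lemma fibFact_succ (m : ℕ) : fibFact (m + 1) = fibFact m * Nat.fib (m + 1) :=
  Finset.prod_range_succ _ _

lemma fibFact_ne_zero (m : ℕ) : fibFact m ≠ 0 :=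
  Finset.prod_ne_zero_iff.mpr fun i _ => (Nat.fib_pos.mpr i.succ_pos).ne'

/-- Integrality of the Fibonomial coefficients, by the Pascal-type recursion coming from
`F_{a+b+2} = F_{a+1} F_b + F_{a+2} F_{b+1}`. -/
lemma fibFact_mul_dvd (a b : ℕ) : fibFact a * fibFact b ∣ fibFact (a + b) := by
  induction a generalizing b with
  | zero => simp [fibFact]
  | succ a iha =>
    induction b with
    | zero => simp [fibFact]
    | succ b ihb =>
      have h : Nat.fib (a + 1 + b + 1) =
          Nat.fib (a + 1) * Nat.fib b + Nat.fib (a + 2) * Nat.fib (b + 1) := Nat.fib_add (a + 1) b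
      have e1 := mul_dvd_mul_right (iha (b + 1)) (Nat.fib (a + 1) * Nat.fib b)
      have e2 := mul_dvd_mul_right ihb (Nat.fib (a + 2) * Nat.fib (b + 1))
      rw [← add_assoc, fibFact_succ (a + 1 + b), h, mul_add]
      refine dvd_add (dvd_trans ?_ (e1.trans ?_)) (dvd_trans ?_ e2)
      · exact ⟨Nat.fib b, by rw [fibFact_succ a]; ring⟩
      · rw [show a + (b + 1) = a + 1 + b by ring]
      · exact ⟨Nat.fib (a + 2), by rw [fibFact_succ b]; ring⟩

lemma prod_fib_sub_mul (a k : ℕ) :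
    (∏ i ∈ Finset.range k, Nat.fib (a + k - i)) * fibFact a = fibFact (a + k) := by
  induction k with
  | zero => simp
  | succ k ih =>
    rw [Finset.prod_range_succ', ← add_assoc, fibFact_succ, ← ih]
    simp only [Nat.sub_zero, Nat.add_sub_add_right]
    ring

lemma fibBinom_mul (a k : ℕ) :
    fibBinom (a + k) k * (fibFact a * fibFact k) = fibFact (a + k) := by
  have h := prod_fib_sub_mul a k
  have hd : fibFact k ∣ ∏ i ∈ Finset.range k, Nat.fib (a + k - i) := by
    have := fibFact_mul_dvd a k
    rw [← h, mul_comm] at this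
    exact Nat.dvd_of_mul_dvd_mul_right (Nat.pos_of_ne_zero (fibFact_ne_zero a)) this
  have e : fibBinom (a + k) k * fibFact k = ∏ i ∈ Finset.range k, Nat.fib (a + k - i) :=
    Nat.div_mul_cancel hd
  rw [← h, ← e]; ring

/-! ### The 2-adic valuation of Fibonacci numbers -/

lemma padicValNat_two_eq {m k : ℕ} (h : 2 ^ k ∣ m) (h' : ¬ 2 ^ (k + 1) ∣ m) :
    padicValNat 2 m = k := by
  have hm : m ≠ 0 := by
    rintro rfl
    exact h' (dvd_zero _)
  rw [padicValNat_dvd_iff_le hm] at h h'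
  omega

/-- Reduction modulo `16` along the period `24`. -/
lemma fib_mod_sixteen (q r : ℕ) : Nat.fib (24 * q + r) % 16 = Nat.fib r % 16 := by
  induction q generalizing r with
  | zero => simp
  | succ q ih =>
    rw [show 24 * (q + 1) + r = 24 * q + (23 + r + 1) by ring, ih, Nat.fib_add 23 r]
    norm_num [Nat.fib_add_two]
    omega

lemma fib_mod_sixteen' (m : ℕ) : Nat.fib m % 16 = Nat.fib (m % 24) % 16 := by
  conv_lhs => rw [← Nat.div_add_mod m 24]
  exact fib_mod_sixteen _ _

lemma fib_odd_of_not_dvd (m : ℕ) (h : ¬ 3 ∣ m) : ¬ 2 ∣ Nat.fib m := by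
  have h1 := fib_mod_sixteen' m
  have h2 : m % 24 < 24 := Nat.mod_lt _ (by norm_num)
  have h3 : m % 24 % 3 ≠ 0 := by omega
  generalize m % 24 = r at *
  interval_cases r <;> norm_num [Nat.fib_add_two] at h1 h3 <;> omega

lemma padicValNat_fib_odd (t : ℕ) : padicValNat 2 (Nat.fib (3 * (2 * t + 1))) = 1 := by
  have h1 := fib_mod_sixteen' (3 * (2 * t + 1))
  have h4 : Nat.fib (3 * (2 * t + 1)) % 4 = 2 := by
    have h2 : 3 * (2 * t + 1) % 24 < 24 := Nat.mod_lt _ (by norm_num)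
    have h3 : 3 * (2 * t + 1) % 24 % 6 = 3 := by omega
    generalize 3 * (2 * t + 1) % 24 = r at *
    interval_cases r <;> norm_num [Nat.fib_add_two] at h1 h3 <;> omega
  refine padicValNat_two_eq ?_ ?_ <;> omega

lemma padicValNat_fib_two_mul_odd (t : ℕ) :
    padicValNat 2 (Nat.fib (2 * (3 * (2 * t + 1)))) = 3 := by
  have h1 := fib_mod_sixteen' (2 * (3 * (2 * t + 1)))
  have h4 : Nat.fib (2 * (3 * (2 * t + 1))) % 16 = 8 := by
    have h2 : 2 * (3 * (2 * t + 1)) % 24 < 24 := Nat.mod_lt _ (by norm_num)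
    have h3 : 2 * (3 * (2 * t + 1)) % 24 % 12 = 6 := by omega
    generalize 2 * (3 * (2 * t + 1)) % 24 = r at *
    interval_cases r <;> norm_num [Nat.fib_add_two] at h1 h3 <;> omega
  refine padicValNat_two_eq ?_ ?_ <;> omega

/-- Doubling an index divisible by `6` raises the valuation by one, since the Lucas factor
`2 F_{m+1} - F_m` is `2` modulo `4`. -/
lemma padicValNat_fib_double (m : ℕ) (hm : 0 < m) (h6 : 6 ∣ m) :
    padicValNat 2 (Nat.fib (2 * m)) = padicValNat 2 (Nat.fib m) + 1 := by
  have h8 : 8 ∣ Nat.fib m := Nat.fib_dvd 6 m h6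
  have ho := fib_odd_of_not_dvd (m + 1) (by omega)
  have hle : Nat.fib m ≤ Nat.fib (m + 1) := Nat.fib_le_fib_succ
  have hv : padicValNat 2 (2 * Nat.fib (m + 1) - Nat.fib m) = 1 := by
    refine padicValNat_two_eq ?_ ?_ <;> omega
  have hp := Nat.fib_pos.mpr hm
  rw [Nat.fib_two_mul, padicValNat.mul hp.ne' (by omega), hv]

lemma padicValNat_fib_two_pow (a t : ℕ) :
    padicValNat 2 (Nat.fib (2 ^ (a + 1) * (3 * (2 * t + 1)))) = a + 3 := by
  induction a with
  | zero => simpa using padicValNat_fib_two_mul_odd t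
  | succ a ih =>
    rw [show 2 ^ (a + 1 + 1) * (3 * (2 * t + 1)) = 2 * (2 ^ (a + 1) * (3 * (2 * t + 1))) by ring,
      padicValNat_fib_double _ (by positivity) ⟨2 ^ a * (2 * t + 1), by ring⟩, ih]

lemma sum_fibWeight (a : ℕ) : ∑ i ∈ Finset.range (a + 2), fibWeight i = a + 3 := by
  induction a with
  | zero => simp [Finset.sum_range_succ, fibWeight]
  | succ a ih => rw [Finset.sum_range_succ, ih]; simp [fibWeight]

lemma padicValNat_fib (m B : ℕ) (hm : 0 < m) (hB : m < 3 * 2 ^ B) :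
    padicValNat 2 (Nat.fib m) =
      ∑ i ∈ Finset.range B, fibWeight i * if 3 * 2 ^ i ∣ m then 1 else 0 := by
  by_cases h3 : 3 ∣ m
  · obtain ⟨c, rfl⟩ := h3
    obtain ⟨a, q, hq, rfl⟩ := Nat.exists_eq_two_pow_mul_odd (n := c) (by omega)
    obtain ⟨t, rfl⟩ := hq
    have haB : a < B := by
      have h1 : 2 ^ a * 1 ≤ 2 ^ a * (2 * t + 1) := Nat.mul_le_mul_left _ (by omega)
      exact (Nat.pow_lt_pow_iff_right (a := 2) (by norm_num)).mp (by omega)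
    have hd : ∀ i, 3 * 2 ^ i ∣ 3 * (2 ^ a * (2 * t + 1)) ↔ i < a + 1 := by
      intro i
      rw [Nat.mul_dvd_mul_iff_left (by norm_num)]
      constructor
      · intro h
        have hc : Nat.Coprime (2 ^ i) (2 * t + 1) := Nat.Coprime.pow_left _ (by simp)
        have := Nat.le_of_dvd (by positivity) (hc.dvd_of_dvd_mul_right h)
        have := (Nat.pow_le_pow_iff_right (a := 2) (by norm_num)).mp this
        omega
      · intro h
        exact (pow_dvd_pow 2 (by omega)).mul_right _
    have hs : (Finset.range B).filter (fun i => i < a + 1) = Finset.range (a + 1) := by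
      ext i; simp; omega
    simp only [hd, mul_ite, mul_one, mul_zero]
    rw [← Finset.sum_filter, hs]
    cases a with
    | zero => simpa [fibWeight] using padicValNat_fib_odd t
    | succ a =>
      rw [sum_fibWeight, ← padicValNat_fib_two_pow a t]
      congr 2; ring
  · rw [padicValNat.eq_zero_of_not_dvd (fib_odd_of_not_dvd m h3)]
    symm
    refine Finset.sum_eq_zero fun i _ => ?_
    rw [if_neg fun h => h3 (dvd_of_mul_right_dvd h), mul_zero]

/-- The analogue of Legendre's formula for `F_1 ⋯ F_m` at the prime `2`. -/
lemma padicValNat_fibFact (m B : ℕ) (hB : m < 3 * 2 ^ B) :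
    padicValNat 2 (fibFact m) = ∑ i ∈ Finset.range B, fibWeight i * (m / (3 * 2 ^ i)) := by
  induction m with
  | zero => simp [fibFact]
  | succ m ih =>
    rw [fibFact_succ, padicValNat.mul (fibFact_ne_zero m) (Nat.fib_pos.mpr m.succ_pos).ne',
      ih (by omega), padicValNat_fib _ B m.succ_pos hB, ← Finset.sum_add_distrib]
    refine Finset.sum_congr rfl fun i _ => ?_
    rw [Nat.succ_div, mul_add]

/-! ### Oddness as absence of carries -/

lemma div_add_iff (n M : ℕ) (hM : 0 < M) :
    7 * n / M + n / M = 8 * n / M ↔ 7 * n % M + n % M < M := by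
  rw [show 8 * n = 7 * n + n by ring, Nat.add_div hM]
  split_ifs <;> omega

/-- Oddness of `C(8n, n)_F` as the absence of carries in `7n + n`. The bound `i < 8n` is harmless,
as `3 · 2 ^ (8n) > 8n`. -/
lemma odd_iff_noCarry (n : ℕ) :
    ¬ 2 ∣ fibBinom (8 * n) n ↔
      ∀ i < 8 * n, 7 * n % (3 * 2 ^ i) + n % (3 * 2 ^ i) < 3 * 2 ^ i := by
  have hB : 8 * n < 3 * 2 ^ (8 * n) := by
    have := Nat.lt_two_pow_self (n := 8 * n)
    omega
  have hm := fibBinom_mul (7 * n) n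
  rw [show 7 * n + n = 8 * n by ring] at hm
  have h0 : fibBinom (8 * n) n ≠ 0 := by
    intro h
    rw [h, zero_mul] at hm
    exact fibFact_ne_zero _ hm.symm
  have hv := congrArg (padicValNat 2) hm
  rw [padicValNat.mul h0 (mul_ne_zero (fibFact_ne_zero _) (fibFact_ne_zero _)),
    padicValNat.mul (fibFact_ne_zero _) (fibFact_ne_zero _),
    padicValNat_fibFact (7 * n) (8 * n) (by omega), padicValNat_fibFact n (8 * n) (by omega),
    padicValNat_fibFact (8 * n) (8 * n) hB, ← Finset.sum_add_distrib] at hv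
  have hle : ∀ i ∈ Finset.range (8 * n),
      fibWeight i * (7 * n / (3 * 2 ^ i)) + fibWeight i * (n / (3 * 2 ^ i)) ≤
        fibWeight i * (8 * n / (3 * 2 ^ i)) := by
    intro i _
    rw [← mul_add, show 8 * n = 7 * n + n by ring]
    exact Nat.mul_le_mul_left _ (Nat.div_add_div_le_add_div)
  have hiff := Finset.sum_eq_sum_iff_of_le hle
  have hz : ¬ 2 ∣ fibBinom (8 * n) n ↔ padicValNat 2 (fibBinom (8 * n) n) = 0 := by
    rw [dvd_iff_padicValNat_ne_zero h0, not_not]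
  rw [hz]
  trans (∑ i ∈ Finset.range (8 * n),
      (fibWeight i * (7 * n / (3 * 2 ^ i)) + fibWeight i * (n / (3 * 2 ^ i))) =
        ∑ i ∈ Finset.range (8 * n), fibWeight i * (8 * n / (3 * 2 ^ i)))
  · omega
  · rw [hiff]
    refine forall_congr' fun i => ?_
    have hw : 0 < fibWeight i := by unfold fibWeight; split_ifs <;> norm_num
    rw [Finset.mem_range, ← mul_add, Nat.mul_right_inj hw.ne', div_add_iff _ _ (by positivity)]

/-! ### The residues without carries -/

lemma mod_two_mul_cases (n M : ℕ) :
    n % (2 * M) = n % M ∨ n % (2 * M) = n % M + M := by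
  rw [mul_comm 2 M, Nat.mod_mul]
  rcases Nat.mod_two_eq_zero_or_one (n / M) with h | h <;> simp [h]

/-- Classification of the no-carry residues modulo `3 · 2 ^ j`. -/
lemma residue_of_noCarry (n j : ℕ)
    (h : ∀ i ≤ j, 7 * n % (3 * 2 ^ i) + n % (3 * 2 ^ i) < 3 * 2 ^ i) :
    n % (3 * 2 ^ j) = 0 ∨
      ∃ k, 0 < k ∧ k % 3 = 1 ∧ k ≤ j + 2 ∧ 7 * (n % (3 * 2 ^ j)) = 1 + 3 * 2 ^ k := by
  induction j with
  | zero =>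
    have h0 := h 0 le_rfl
    simp only [pow_zero, mul_one] at h0 ⊢
    rcases (show n % 3 = 0 ∨ n % 3 = 1 by omega) with h1 | h1
    · exact Or.inl h1
    · exact Or.inr ⟨1, by norm_num, by norm_num, by norm_num, by rw [h1]; norm_num⟩
  | succ j ih =>
    have hc := h (j + 1) le_rfl
    have ih := ih fun i hi => h i (by omega)
    rw [show 3 * 2 ^ (j + 1) = 2 * (3 * 2 ^ j) by ring] at hc ⊢
    have hJ : 0 < 2 ^ j := by positivity
    obtain ⟨M, hMe⟩ : ∃ M, M = 3 * 2 ^ j := ⟨_, rfl⟩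
    rw [← hMe] at hc ih ⊢
    have hM : 3 ≤ M := by omega
    -- The residue of `7n` modulo `2M` is read off from that of `n`.
    have key : ∀ t u, 7 * (n % (2 * M)) = 2 * M * t + u → u < 2 * M →
        u + n % (2 * M) < 2 * M := by
      intro t u h1 h2
      rwa [Nat.mul_mod, ← Nat.mul_mod_mod, Nat.mod_mod, Nat.mod_mul_mod, h1, Nat.mul_add_mod,
        Nat.mod_eq_of_lt h2] at hc
    rcases mod_two_mul_cases n M with hs | hs
    · rw [hs]
      rcases ih with h0 | ⟨k, hk0, hk3, hkj, hk⟩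
      · exact Or.inl h0
      · exact Or.inr ⟨k, hk0, hk3, by omega, hk⟩
    · rcases ih with h0 | ⟨k, hk0, hk3, hkj, hk⟩
      · have := key 3 M (by rw [hs, h0]; ring) (by omega)
        omega
      · rcases (show k = j + 2 ∨ k = j + 1 ∨ k = j ∨ k + 1 ≤ j by omega) with rfl | rfl | rfl | hlt
        · have e : 3 * 2 ^ (j + 2) = 4 * M := by rw [hMe]; ring
          have := key 5 (1 + M) (by rw [hs]; linarith) (by omega)
          omega
        · have e : 3 * 2 ^ (j + 1) = 2 * M := by rw [hMe]; ring
          have := key 4 (1 + M) (by rw [hs]; linarith) (by omega)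
          omega
        · refine Or.inr ⟨k + 3, by omega, by omega, by omega, ?_⟩
          have e : 3 * 2 ^ (k + 3) = 8 * M := by rw [hMe]; ring
          rw [hs, e]; omega
        · have e : 2 ^ (k + 1) ≤ 2 ^ j := Nat.pow_le_pow_right (by norm_num) hlt
          rw [pow_succ] at e
          have := key 3 (1 + 3 * 2 ^ k + M) (by rw [hs]; linarith) (by omega)
          omega

lemma noCarry_of_eq (n k i : ℕ) (hk0 : 0 < k) (hk : 7 * n = 1 + 3 * 2 ^ k) :
    7 * n % (3 * 2 ^ i) + n % (3 * 2 ^ i) < 3 * 2 ^ i := by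
  have hI : 0 < 2 ^ i := by positivity
  rcases le_or_gt i k with hik | hik
  · have h1 : 7 * n % (3 * 2 ^ i) = 1 := by
      obtain ⟨d, rfl⟩ := Nat.exists_eq_add_of_le hik
      rw [hk, show 1 + 3 * 2 ^ (i + d) = 3 * 2 ^ i * 2 ^ d + 1 by ring, Nat.mul_add_mod,
        Nat.mod_eq_of_lt (by omega)]
    have h2 := Nat.mod_lt n (show 0 < 3 * 2 ^ i by omega)
    -- A carry would force `n ≡ -1`, hence `-7 ≡ 1` modulo `3 * 2 ^ i`, so `3 ∣ 8`.
    have h3 : n % (3 * 2 ^ i) + 1 ≠ 3 * 2 ^ i := by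
      intro h
      have h4 := Nat.div_add_mod n (3 * 2 ^ i)
      rw [mul_assoc] at h4
      have : 1 ≤ 2 ^ k := Nat.one_le_two_pow
      omega
    omega
  · have e : 2 ^ (k + 1) ≤ 2 ^ i := Nat.pow_le_pow_right (by norm_num) hik
    have e2 : 2 ^ 1 ≤ 2 ^ k := Nat.pow_le_pow_right (by norm_num) hk0
    rw [pow_succ] at e
    rw [Nat.mod_eq_of_lt (by omega), Nat.mod_eq_of_lt (by omega)]
    omega

lemma seven_dvd (k : ℕ) (hk : k % 3 = 1) : 7 ∣ 1 + 3 * 2 ^ k := by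
  obtain ⟨d, rfl⟩ : ∃ d, k = 3 * d + 1 := ⟨k / 3, by omega⟩
  have : 8 ^ d % 7 = 1 := by simp [Nat.pow_mod]
  rw [pow_succ, pow_mul]
  norm_num
  omega

theorem fibonomial_eight_n_choose_n_odd_iff (n : ℕ) (hn : 0 < n) :
    ¬ 2 ∣ fibBinom (8 * n) n ↔
      ∃ k : ℕ, 0 < k ∧ k % 3 = 1 ∧ n = (1 + 3 * 2 ^ k) / 7 := by
  rw [odd_iff_noCarry]
  constructor
  · intro h
    have hlt : n < 3 * 2 ^ n := by
      have := Nat.lt_two_pow_self (n := n)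
      omega
    have := residue_of_noCarry n n fun i hi => h i (by omega)
    rw [Nat.mod_eq_of_lt hlt] at this
    rcases this with h0 | ⟨k, hk0, hk3, -, hk⟩
    · omega
    · exact ⟨k, hk0, hk3, by omega⟩
  · rintro ⟨k, hk0, hk3, hk⟩ i -
    exact noCarry_of_eq n k i hk0 (by have := seven_dvd k hk3; omega)
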